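/- Let φ: R → S be a faithfully flat morphism of integral domains, let A be a finite flat R-algebra, and let K and L be the fraction fields of R and S respectively. If the number of block idempotents of A^K = K ⊗_R A equals the number of block idempotents of A^L = L ⊗_R A, then the canonical morphism φ_A: A → A^S = S ⊗_R A is block bijective. -/

import Mathlib

open TensorProduct

section BlockDefs
variable {B : Type*} [Ring B]
def IsBlockIdem (e : B) : Prop :=
  IsIdempotentElem e ∧ e ≠ 0 ∧ (∀ x : B, e * x = x * e) ∧
    ∀ f g : B, (∀ x : B, f * x = x * f) → (∀ x : B, g * x = x * g) →
      IsIdempotentElem f → IsIdempotentElem g → f * g = 0 → f + g = e → f = 0 ∨ g = 0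
end BlockDefs

noncomputable def numBlocks (B : Type*) [Ring B] : ℕ := Nat.card {e : B // IsBlockIdem e}

def BlockBijective {B C : Type*} [Ring B] [Ring C] (φ : B → C) : Prop :=
  Set.BijOn φ {e | IsBlockIdem e} {e | IsBlockIdem e}

/-!
Blocks are the atoms of the Boolean algebra of central idempotents, which for a finite-dimensional
algebra is finite, so with `n` blocks it has `2 ^ n` elements. The map `A^K → A^L` embeds one such
algebra into another, and equality of the block numbers makes the embedding onto. Hence a central
idempotent `f` of `A^S`, viewed in `A^L`, comes from some `x` in `A^K`. Clearing denominators gives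
`r • f = 1 ⊗ a` with `a` in `A` and `r ≠ 0`; since `A ⧸ r A` embeds into its base change to `S`,
`a` is divisible by `r`, so `f` comes from `A`. Thus `A` and `A^S` have the same central
idempotents, hence the same blocks.
-/

/-- The central idempotents of `B`, encoded as idempotents of its center so that they inherit
Mathlib's Boolean algebra structure; the blocks of `B` are the atoms of this algebra. -/
abbrev CentralIdempotent (B : Type*) [Ring B] : Type _ :=
  {e : Subring.center B // IsIdempotentElem e}

namespace CentralIdempotent

variable {B C : Type*} [Ring B] [Ring C]

/-- The central idempotent given by an idempotent of `B` that commutes with every element. -/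
def ofCommute (e : B) (he : IsIdempotentElem e) (hcomm : ∀ x, e * x = x * e) :
    CentralIdempotent B :=
  ⟨⟨e, Subring.mem_center_iff.2 fun x => (hcomm x).symm⟩, Subtype.ext he⟩

theorem coe_mul_comm (e : CentralIdempotent B) (x : B) : (e.1 : B) * x = x * e.1 :=
  (Subring.mem_center_iff.1 e.1.2 x).symm

theorem isIdempotentElem_coe (e : CentralIdempotent B) : IsIdempotentElem (e.1 : B) :=
  congrArg Subtype.val e.2

theorem coe_injective : Function.Injective fun e : CentralIdempotent B => (e.1 : B) :=
  Subtype.val_injective.comp Subtype.val_injective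

theorem coe_eq_zero_iff {e : CentralIdempotent B} : (e.1 : B) = 0 ↔ e = ⊥ :=
  coe_injective.eq_iff (b := ⊥)

theorem le_iff_coe_mul_eq {e f : CentralIdempotent B} : e ≤ f ↔ (e.1 : B) * f.1 = e.1 :=
  Subtype.ext_iff (a1 := e.1 * f.1)

theorem isBlockIdem_of_isAtom {e : CentralIdempotent B} (he : IsAtom e) :
    IsBlockIdem (e.1 : B) := by
  refine ⟨e.isIdempotentElem_coe, coe_eq_zero_iff.not.2 he.1, e.coe_mul_comm, ?_⟩
  intro f g hf _ hff _ hfg hsum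
  have f_le_e : ofCommute f hff hf ≤ e :=
    le_iff_coe_mul_eq.2 (show f * e.1 = f by rw [← hsum, mul_add, hfg, hff.eq, add_zero])
  rcases he.le_iff.1 f_le_e with f_eq_bot | f_eq_e
  · exact Or.inl (coe_eq_zero_iff.2 f_eq_bot)
  · have f_eq : f = e.1 := congrArg (·.1.1) f_eq_e
    exact Or.inr (by simpa [f_eq] using hsum)

theorem isAtom_of_isBlockIdem {e : CentralIdempotent B} (he : IsBlockIdem (e.1 : B)) :
    IsAtom e := by
  obtain ⟨-, e_ne_zero, -, indecomposable⟩ := he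
  refine ⟨coe_eq_zero_iff.not.1 e_ne_zero, fun f f_lt_e => ?_⟩
  have fe : (f.1 : B) * e.1 = f.1 := le_iff_coe_mul_eq.1 f_lt_e.le
  have ef : (e.1 : B) * f.1 = f.1 := by rw [e.coe_mul_comm, fe]
  rcases indecomposable f.1 (e.1 - f.1) f.coe_mul_comm
      (fun x => by rw [sub_mul, mul_sub, e.coe_mul_comm, f.coe_mul_comm])
      f.isIdempotentElem_coe (f.isIdempotentElem_coe.sub e.isIdempotentElem_coe fe ef)
      (by rw [mul_sub, fe, f.isIdempotentElem_coe.eq, sub_self]) (add_sub_cancel _ _)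
    with f_eq_zero | e_sub_f_eq_zero
  · exact coe_eq_zero_iff.1 f_eq_zero
  · exact absurd (coe_injective (sub_eq_zero.1 e_sub_f_eq_zero).symm) f_lt_e.ne

theorem isAtom_iff_isBlockIdem {e : CentralIdempotent B} : IsAtom e ↔ IsBlockIdem (e.1 : B) :=
  ⟨isBlockIdem_of_isAtom, isAtom_of_isBlockIdem⟩

/-- The bijection between the atoms of the Boolean algebra of central idempotents and the blocks. -/
def atomsEquivBlocks (B : Type*) [Ring B] :
    {e : CentralIdempotent B // IsAtom e} ≃ {e : B // IsBlockIdem e} where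
  toFun e := ⟨e.1.1, isAtom_iff_isBlockIdem.1 e.2⟩
  invFun e := ⟨ofCommute e.1 e.2.1 e.2.2.2.1, isAtom_iff_isBlockIdem.2 e.2⟩

theorem card_eq_two_pow_numBlocks [Finite (CentralIdempotent B)] :
    Nat.card (CentralIdempotent B) = 2 ^ numBlocks B := by
  have := Fintype.ofFinite (CentralIdempotent B)
  let := Fintype.toCompleteAtomicBooleanAlgebra (CentralIdempotent B)
  calc Nat.card (CentralIdempotent B)
      = Nat.card (Set {e : CentralIdempotent B // IsAtom e}) :=
        Nat.card_congr CompleteAtomicBooleanAlgebra.toSetOfIsAtom.toEquiv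
    _ = 2 ^ Nat.card {e : CentralIdempotent B // IsAtom e} := by
        classical simp only [Nat.card_eq_fintype_card, Fintype.card_set]
    _ = 2 ^ numBlocks B := by rw [numBlocks, Nat.card_congr (atomsEquivBlocks B)]

/-- The order embedding of central idempotents induced by an injective ring homomorphism that maps
the center into the center. -/
def map (φ : B →+* C) (hφ : Function.Injective φ)
    (hcenter : ∀ z ∈ Subring.center B, φ z ∈ Subring.center C) :
    CentralIdempotent B ↪o CentralIdempotent C :=
  OrderEmbedding.ofMapLEIff
    (fun e => ⟨φ.restrict _ _ hcenter e.1, e.2.map _⟩)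
    (fun e f => by
      rw [le_iff_coe_mul_eq, le_iff_coe_mul_eq, ← hφ.eq_iff, map_mul]
      rfl)

theorem finite_of_finiteDimensional (K B : Type*) [Field K] [Ring B] [Algebra K B]
    [FiniteDimensional K B] : Finite (CentralIdempotent B) := by
  have : IsArtinianRing (Subring.center B) :=
    IsArtinianRing.of_finite K (Subalgebra.center K B)
  have : Finite (TopologicalSpace.Clopens (PrimeSpectrum (Subring.center B))) :=
    Finite.of_injective _ SetLike.coe_injective
  exact Finite.of_equiv _ PrimeSpectrum.isIdempotentElemEquivClopens.symm.toEquiv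

variable {φ : B →+* C} {hφ : Function.Injective φ}
  {hcenter : ∀ z ∈ Subring.center B, φ z ∈ Subring.center C}

theorem map_surjective_of_numBlocks_le [Finite (CentralIdempotent C)]
    (hnum : numBlocks C ≤ numBlocks B) : Function.Surjective (map φ hφ hcenter) := by
  have := Finite.of_injective _ (map φ hφ hcenter).injective
  refine ((map φ hφ hcenter).injective.bijective_of_nat_card_le ?_).surjective
  rw [card_eq_two_pow_numBlocks, card_eq_two_pow_numBlocks]
  exact Nat.pow_le_pow_right two_pos hnum

theorem map_surjective_of_coe_mem_range
    (hrange : ∀ f : CentralIdempotent C, (f.1 : C) ∈ φ.range) :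
    Function.Surjective (map φ hφ hcenter) := by
  intro f
  obtain ⟨e, he⟩ := hrange f
  have e_idem : IsIdempotentElem e := hφ (by rw [map_mul, he, f.isIdempotentElem_coe.eq])
  have e_comm (x : B) : e * x = x * e := hφ (by rw [map_mul, map_mul, he, f.coe_mul_comm])
  exact ⟨ofCommute e e_idem e_comm, coe_injective he⟩

theorem blockBijective_of_map_surjective (hsurj : Function.Surjective (map φ hφ hcenter)) :
    BlockBijective φ := by
  have isBlockIdem_map_iff (e : CentralIdempotent B) :
      IsBlockIdem (φ e.1) ↔ IsBlockIdem (e.1 : B) := by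
    let mapIso : CentralIdempotent B ≃o CentralIdempotent C :=
      RelIso.ofSurjective (map φ hφ hcenter) hsurj
    rw [← isAtom_iff_isBlockIdem, ← mapIso.isAtom_iff, isAtom_iff_isBlockIdem]
    rfl
  refine ⟨fun e he => ?_, hφ.injOn, fun f hf => ?_⟩
  · exact (isBlockIdem_map_iff (ofCommute e he.1 he.2.2.1)).2 he
  · obtain ⟨e, he⟩ := hsurj (ofCommute f hf.1 hf.2.2.1)
    obtain rfl : φ e.1 = f := congrArg (·.1.1) he
    exact ⟨e.1, (isBlockIdem_map_iff e).1 hf, rfl⟩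

end CentralIdempotent

theorem BlockBijective.numBlocks_eq {B C : Type*} [Ring B] [Ring C] {φ : B → C}
    (hφ : BlockBijective φ) : numBlocks B = numBlocks C :=
  Nat.card_congr (Set.BijOn.equiv φ hφ)

theorem map_mem_center_of_span_range_eq_top {T B C : Type*} [CommRing T] [Ring B] [Ring C]
    [Algebra T C] (φ : B →+* C) (hφ : Submodule.span T (Set.range φ) = ⊤) :
    ∀ z ∈ Subring.center B, φ z ∈ Subring.center C := by
  intro z hz
  rw [Subring.mem_center_iff] at hz ⊢
  intro y
  have hy : y ∈ Submodule.span T (Set.range φ) := hφ ▸ Submodule.mem_top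
  induction hy using Submodule.span_induction with
  | mem y hy =>
    obtain ⟨b, rfl⟩ := hy
    rw [← map_mul, hz, map_mul]
  | zero => rw [zero_mul, mul_zero]
  | add x y _ _ hx hy => rw [add_mul, mul_add, hx, hy]
  | smul t y _ hy => rw [smul_mul_assoc, mul_smul_comm, hy]

theorem numBlocks_congr {B C : Type*} [Ring B] [Ring C] (e : B ≃+* C) :
    numBlocks B = numBlocks C :=
  BlockBijective.numBlocks_eq (φ := (e : B →+* C)) <|
    CentralIdempotent.blockBijective_of_map_surjective (hφ := e.injective)
      (hcenter := fun z hz => (Subring.centerCongr e ⟨z, hz⟩).2) <|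
    CentralIdempotent.map_surjective_of_coe_mem_range fun f => e.surjective f.1

section BaseChange

variable {R : Type*} [CommRing R]

theorem mem_range_of_one_tmul_mem_range_lTensor {S M N : Type*} [CommRing S] [Algebra R S]
    [Module.FaithfullyFlat R S] [AddCommGroup M] [Module R M] [AddCommGroup N] [Module R N]
    (f : M →ₗ[R] N) {n : N} (hn : (1 : S) ⊗ₜ[R] n ∈ (f.lTensor S).range) : n ∈ f.range := by
  obtain ⟨z, hz⟩ := hn
  have one_tmul_mk : (1 : S) ⊗ₜ[R] f.range.mkQ n = 0 := by
    rw [← LinearMap.lTensor_tmul, ← hz, ← LinearMap.comp_apply, ← LinearMap.lTensor_comp,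
      LinearMap.range_mkQ_comp, LinearMap.lTensor_zero, LinearMap.zero_apply]
  rw [Module.FaithfullyFlat.one_tmul_eq_zero_iff] at one_tmul_mk
  simpa using one_tmul_mk

-- After composing with `M → K ⊗[R] M`, where `K` is the fraction field, flatness of `P` handles
-- `P ⊗[R] M → P ⊗[R] (K ⊗[R] M)` and flatness of `K ⊗[R] M` handles the map induced by `f`.
theorem rTensor_injective_of_flat_of_isTorsionFree [IsDomain R] {P Q M : Type*}
    [AddCommGroup P] [Module R P] [Module.Flat R P] [AddCommGroup Q] [Module R Q]
    [AddCommGroup M] [Module R M] [Module.IsTorsionFree R M]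
    {f : P →ₗ[R] Q} (hf : Function.Injective f) : Function.Injective (f.rTensor M) := by
  let K := FractionRing R
  have toLocalization_injective : Function.Injective (TensorProduct.mk R K M 1) :=
    (IsLocalizedModule.injective_iff_isRegular (nonZeroDivisors R) _).2 fun r =>
      Module.IsTorsionFree.isSMulRegular (IsRegular.of_ne_zero (nonZeroDivisors.ne_zero r.2))
  have : Module.Flat R (K ⊗[R] M) := Module.Flat.trans R K _
  have map_injective : Function.Injective (TensorProduct.map f (TensorProduct.mk R K M 1)) := by
    rw [← LinearMap.rTensor_comp_lTensor]
    exact (Module.Flat.rTensor_preserves_injective_linearMap f hf).comp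
      (Module.Flat.lTensor_preserves_injective_linearMap _ toLocalization_injective)
  rw [← LinearMap.lTensor_comp_rTensor] at map_injective
  exact Function.Injective.of_comp map_injective

open Algebra.TensorProduct (includeRight rTensor)

theorem span_range_includeRight (T A : Type*) [CommRing T] [Algebra R T] [Ring A] [Algebra R A] :
    Submodule.span T (Set.range (includeRight : A →ₐ[R] T ⊗[R] A)) = ⊤ := by
  rw [← Submodule.baseChange_top T, Submodule.baseChange_eq_span, Submodule.map_top]
  rfl

theorem includeRight_mem_center (T A : Type*) [CommRing T] [Algebra R T] [Ring A] [Algebra R A] :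
    ∀ z ∈ Subring.center A,
      (includeRight : A →ₐ[R] T ⊗[R] A).toRingHom z ∈ Subring.center (T ⊗[R] A) :=
  map_mem_center_of_span_range_eq_top _ (span_range_includeRight T A)

theorem rTensor_mem_center {T U : Type*} [CommRing T] [Algebra R T] [CommRing U] [Algebra R U]
    (A : Type*) [Ring A] [Algebra R A] (g : T →ₐ[R] U) :
    ∀ z ∈ Subring.center (T ⊗[R] A),
      (rTensor A g).toRingHom z ∈ Subring.center (U ⊗[R] A) := by
  refine map_mem_center_of_span_range_eq_top (T := U) _ (top_le_iff.1 ?_)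
  rw [← span_range_includeRight U A]
  refine Submodule.span_mono ?_
  rintro _ ⟨a, rfl⟩
  exact ⟨1 ⊗ₜ a, by simp⟩

/-- The embedding of the central idempotents of `T ⊗[R] A` into those of `U ⊗[R] A` induced by an
injective homomorphism `T → U` from a flat `R`-algebra, for a torsion-free `R`-algebra `A`. -/
def CentralIdempotent.baseChange [IsDomain R] {T U : Type*} [CommRing T] [Algebra R T]
    [Module.Flat R T] [CommRing U] [Algebra R U] (A : Type*) [Ring A] [Algebra R A]
    [Module.IsTorsionFree R A] (g : T →ₐ[R] U) (hg : Function.Injective g) :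
    CentralIdempotent (T ⊗[R] A) ↪o CentralIdempotent (U ⊗[R] A) :=
  map (rTensor A g).toRingHom
    (rTensor_injective_of_flat_of_isTorsionFree (f := g.toLinearMap) hg)
    (rTensor_mem_center A g)

theorem exists_one_tmul_eq_of_rTensor_eq [IsDomain R] {K S L M : Type*}
    [CommRing K] [Algebra R K] [IsFractionRing R K]
    [CommRing S] [Algebra R S] [Module.FaithfullyFlat R S]
    [CommRing L] [Algebra R L] [Algebra S L] [IsScalarTower R S L] [FaithfulSMul S L]
    [Algebra K L] [IsScalarTower R K L] [AddCommGroup M] [Module R M]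
    [Module.IsTorsionFree R M] {x : K ⊗[R] M} {y : S ⊗[R] M}
    (hxy : (IsScalarTower.toAlgHom R K L).toLinearMap.rTensor M x =
      (IsScalarTower.toAlgHom R S L).toLinearMap.rTensor M y) :
    ∃ m : M, (1 : S) ⊗ₜ[R] m = y := by
  have toL_injective :
      Function.Injective ((IsScalarTower.toAlgHom R S L).toLinearMap.rTensor M) :=
    rTensor_injective_of_flat_of_isTorsionFree (FaithfulSMul.algebraMap_injective S L)
  obtain ⟨⟨n, r⟩, hn⟩ :=
    IsLocalizedModule.surj (nonZeroDivisors R) (TensorProduct.mk R K M 1) x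
  have smul_y : (r : R) • y = 1 ⊗ₜ n := toL_injective <| by
    rw [map_smul, ← hxy, ← map_smul, ← Submonoid.smul_def, hn]
    simp
  -- `n` is divisible by `r` in `M` because it is so in `S ⊗[R] M`.
  obtain ⟨m, rfl⟩ : n ∈ ((r : R) • (LinearMap.id : M →ₗ[R] M)).range :=
    mem_range_of_one_tmul_mem_range_lTensor (S := S) _ ⟨y, by
      rw [← smul_y, LinearMap.lTensor_smul, LinearMap.lTensor_id, LinearMap.smul_apply,
        LinearMap.id_apply]⟩
  have x_eq_one_tmul : x = 1 ⊗ₜ m :=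
    IsLocalizedModule.smul_injective (TensorProduct.mk R K M 1) r (by
      simpa [Submonoid.smul_def] using hn)
  exact ⟨m, toL_injective (by rw [← hxy, x_eq_one_tmul]; simp)⟩

end BaseChange

theorem numBlocks_tensorProduct_tensorProduct (R S T A : Type*) [CommRing R] [CommRing S]
    [Algebra R S] [CommRing T] [Algebra R T] [Algebra S T] [IsScalarTower R S T]
    [Ring A] [Algebra R A] : numBlocks (T ⊗[S] (S ⊗[R] A)) = numBlocks (T ⊗[R] A) :=
  let cancelBaseChange : T ⊗[S] (S ⊗[R] A) ≃ₐ[S] T ⊗[R] A :=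
    (Algebra.TensorProduct.assoc R S S T S A).symm.trans
      (Algebra.TensorProduct.congr (Algebra.TensorProduct.rid S S T) .refl)
  numBlocks_congr cancelBaseChange.toRingEquiv

theorem stmt13_general (R K S L A : Type*) [CommRing R] [IsDomain R]
    [Field K] [Algebra R K] [IsFractionRing R K]
    [CommRing S] [Algebra R S] [Module.FaithfullyFlat R S]
    [Field L] [Algebra R L] [Algebra S L] [IsScalarTower R S L] [FaithfulSMul S L]
    [Algebra K L] [IsScalarTower R K L]
    [Ring A] [Algebra R A] [Module.IsTorsionFree R A] [FiniteDimensional K (K ⊗[R] A)]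
    (hnum : numBlocks (L ⊗[R] A) ≤ numBlocks (K ⊗[R] A)) :
    BlockBijective ⇑(Algebra.TensorProduct.includeRight : A →ₐ[R] S ⊗[R] A) := by
  have : Module.Flat R K := IsLocalization.flat K (nonZeroDivisors R)
  have : FiniteDimensional L (L ⊗[R] A) :=
    Module.Finite.equiv (TensorProduct.AlgebraTensorModule.cancelBaseChange R K L L A)
  have := CentralIdempotent.finite_of_finiteDimensional L (L ⊗[R] A)
  have includeRight_injective : Function.Injective
      (Algebra.TensorProduct.includeRight : A →ₐ[R] S ⊗[R] A).toRingHom :=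
    Module.FaithfullyFlat.tensorProduct_mk_injective A
  refine CentralIdempotent.blockBijective_of_map_surjective (hφ := includeRight_injective)
    (hcenter := includeRight_mem_center S A) <|
    CentralIdempotent.map_surjective_of_coe_mem_range fun f => ?_
  obtain ⟨e, he⟩ : ∃ e, CentralIdempotent.baseChange A (IsScalarTower.toAlgHom R K L)
      (algebraMap K L).injective e = CentralIdempotent.baseChange A (IsScalarTower.toAlgHom R S L)
      (FaithfulSMul.algebraMap_injective S L) f :=
    CentralIdempotent.map_surjective_of_numBlocks_le hnum _
  exact exists_one_tmul_eq_of_rTensor_eq (congrArg (·.1.1) he)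

/-- **Theorem `faithfully_flat_ext_block_bij`.** Let `R → S` be a faithfully flat morphism of
integral domains with fraction fields `K` and `L` and let `A` be a finite flat `R`-algebra. If
`A^K` and `A^L` have the same number of blocks, then `A → A^S = S ⊗[R] A` is block bijective. -/
theorem stmt13 (R : Type u) [CommRing R] [IsDomain R] (S : Type u) [CommRing S] [IsDomain S]
    [Algebra R S] [Module.FaithfullyFlat R S]
    (A : Type u) [Ring A] [Algebra R A] [Module.Finite R A] [Module.Flat R A]
    (hnum : numBlocks (FractionRing R ⊗[R] A) =
      numBlocks (FractionRing S ⊗[S] (S ⊗[R] A))) :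
    BlockBijective ⇑(Algebra.TensorProduct.includeRight : A →ₐ[R] S ⊗[R] A) := by
  let := FractionRing.liftAlgebra R (FractionRing S)
  exact stmt13_general R (FractionRing R) S (FractionRing S) A
    (hnum.trans (numBlocks_tensorProduct_tensorProduct R S (FractionRing S) A)).ge
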